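/- Let A ≥ 2 be an integer and let M be a real number with M ≥ 2A. If b is a real number such that b ∈ [ 2πk/A − π/M, 2πk/A + π/M ] for some integer k with 1 ≤ k ≤ A − 1, then 1 − cos b ≥ 2/A². -/

import Mathlib

/-!
Since `π / M ≤ π / (2A)` and `1 ≤ k ≤ A - 1`, the number `b` lies in `[π / A, 2π - π / A]`.
Hence `b / 2` is at distance at least `π / (2A)` from `0` and from `π`, and Jordan's inequality
gives `sin (b / 2) ≥ 1 / A`. The claim follows from `1 - cos b = 2 sin² (b / 2)`.
-/

open Real

/-- Key lower bound: if `A ≥ 2` is an integer, `M ≥ 2A`, and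
`b ∈ [2πk/A − π/M, 2πk/A + π/M]` for some integer `1 ≤ k ≤ A − 1`,
then `1 − cos b ≥ 2 / A²`. -/
theorem cos_lower_bound (A : ℕ) (hA : 2 ≤ A) (M : ℝ) (hM : 2 * (A : ℝ) ≤ M)
    (b : ℝ) (k : ℤ) (hk1 : 1 ≤ k) (hk2 : k ≤ (A : ℤ) - 1)
    (hb : b ∈ Set.Icc (2 * π * k / A - π / M) (2 * π * k / A + π / M)) :
    2 / (A : ℝ) ^ 2 ≤ 1 - Real.cos b := by
  obtain ⟨hb1, hb2⟩ := hb
  have hπ := Real.pi_pos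
  have hA' : (2 : ℝ) ≤ A := by exact_mod_cast hA
  have hA0 : (0 : ℝ) < A := by linarith
  have hk1' : (1 : ℝ) ≤ k := by exact_mod_cast hk1
  have hk2' : (k : ℝ) ≤ A - 1 := by exact_mod_cast hk2
  -- The interval lies at distance at least `π / A` from `0` and from `2π`.
  have hMt : π / M ≤ π / A / 2 := by
    rw [div_div, mul_comm (A : ℝ) 2]
    exact div_le_div_of_nonneg_left hπ.le (by positivity) hM
  have ht0 : 0 < π / A := by positivity
  have htA : π / A * A = π := div_mul_cancel₀ _ hA0.ne'
  have hkt : 2 * π * k / A = 2 * (π / A) * k := by ring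
  rw [hkt] at hb1 hb2
  have hlo : π / A ≤ b := by nlinarith
  have hhi : b ≤ 2 * π - π / A := by nlinarith
  -- Jordan's inequality `2x/π ≤ sin x` on `[0, π/2]`, applied to `b/2` or to `π - b/2`.
  have hval : 2 / π * (π / A / 2) = 1 / A := by field_simp
  have hmono : ∀ x : ℝ, π / A / 2 ≤ x → x ≤ π / 2 → 1 / (A : ℝ) ≤ sin x := by
    intro x h1 h2
    have h := Real.mul_le_sin (x := x) (by linarith) h2
    have h' : 2 / π * (π / A / 2) ≤ 2 / π * x :=
      mul_le_mul_of_nonneg_left h1 (by positivity)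
    linarith
  have hs : 1 / (A : ℝ) ≤ sin (b / 2) := by
    rcases le_total b π with h | h
    · exact hmono _ (by linarith) (by linarith)
    · rw [← Real.sin_pi_sub]
      exact hmono _ (by linarith) (by linarith)
  have hcos : 1 - cos b = 2 * sin (b / 2) ^ 2 := by
    have h := Real.cos_two_mul (b / 2)
    rw [mul_div_cancel₀ b two_ne_zero] at h
    linarith [Real.sin_sq_add_cos_sq (b / 2)]
  have hsq : (1 / (A : ℝ)) ^ 2 ≤ sin (b / 2) ^ 2 := pow_le_pow_left₀ (by positivity) hs 2
  calc 2 / (A : ℝ) ^ 2 = 2 * (1 / (A : ℝ)) ^ 2 := by ring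
    _ ≤ 1 - cos b := by rw [hcos]; linarith
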